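/- arXiv:math/0502032 — 3 statements merged into one kernel-verified Lean document; each statement's English description precedes it below -/
import Mathlib

section
/- Let C₀, N₀ > 0 and let a ∈ ℝ² satisfy |a·k| ≥ 1/(C₀|k|^{N₀}) for every nonzero k ∈ ℤ². Let q : ℝ² → ℂ be smooth and (2πℤ)²-periodic with Fourier coefficients q̂(k). Then there exists C > 0 such that for all T ≥ 1 and all x ∈ ℝ²: | (1/T) ∫₀^T q(x + t a) dt − q̂(0) | ≤ C/T. -/
/-!
The Fourier coefficients of `q` decay faster than any power of the frequency, so `q` is the sum of
its absolutely convergent Fourier series, and along the orbit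
`q (x + t a) = ∑ q̂(k) exp (i k·x) exp (i t k·a)`. Integrating over `[0, T]`, the zero mode gives
`T q̂(0)`, while a mode `k ≠ 0` contributes at most `2 |q̂(k)| / |k·a| ≤ 2 C₀ |k| ^ N₀ |q̂(k)|`,
independently of `T` and `x`. The rapid decay absorbs the small divisors, so the sum of these
bounds is a finite constant; dividing by `T` gives the estimate.

After rescaling to period `1`, the coefficients are written as iterated integrals over the unit
square (`squareCoeff`). Their decay (`exists_squareCoeff_decay`) comes from repeated integration by
parts in one variable, and from exchanging the two variables for the other. The series expansion
(`exists_fourier_expansion`) is Mathlib's theorem on `UnitAddTorus` applied to the function induced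
on the torus. The term-by-term integration is `norm_integral_sub_le`.
-/

open MeasureTheory

/-- `(2πℤ)²`-periodicity of a function on `ℝ²`. -/
def Periodic2 (q : ℝ × ℝ → ℂ) : Prop :=
  ∀ x : ℝ × ℝ, ∀ m : ℤ × ℤ,
    q (x.1 + 2 * Real.pi * (m.1 : ℝ), x.2 + 2 * Real.pi * (m.2 : ℝ)) = q x

/-- The pairing `k·x` of an integer frequency `k ∈ ℤ²` with `x ∈ ℝ²`. -/
noncomputable def dotZR (k : ℤ × ℤ) (x : ℝ × ℝ) : ℝ := (k.1 : ℝ) * x.1 + (k.2 : ℝ) * x.2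

/-- The Euclidean norm of `k ∈ ℤ²`. -/
noncomputable def zNorm (k : ℤ × ℤ) : ℝ := Real.sqrt ((k.1 : ℝ) ^ 2 + (k.2 : ℝ) ^ 2)

/-- The Fourier coefficient `q̂(k) = (2π)⁻² ∫_{[0,2π]²} q(x) e^{−i k·x} dx`. -/
noncomputable def fourierCoeff2 (q : ℝ × ℝ → ℂ) (k : ℤ × ℤ) : ℂ :=
  (1 / (2 * Real.pi) ^ 2 : ℝ) •
    ∫ x in (Set.Icc (0 : ℝ) (2 * Real.pi)) ×ˢ (Set.Icc (0 : ℝ) (2 * Real.pi)),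
      q x * Complex.exp (-Complex.I * (dotZR k x : ℝ))

/-! ### Decay of the Fourier coefficients -/

/-- The `(m, n)` Fourier coefficient of a `ℤ²`-periodic `G`, as an iterated integral over the
unit square. -/
noncomputable def squareCoeff (G : ℝ × ℝ → ℂ) (m n : ℤ) : ℂ :=
  ∫ x in (0 : ℝ)..1, ∫ y in (0 : ℝ)..1,
    fourier (-m) (x : UnitAddCircle) * (fourier (-n) (y : UnitAddCircle) * G (x, y))

lemma continuous_fourier_real (n : ℤ) :
    Continuous fun y : ℝ => fourier n (y : UnitAddCircle) :=
  (fourier n).continuous.comp (AddCircle.continuous_mk' 1)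

lemma norm_fourier_apply (n : ℤ) (z : UnitAddCircle) : ‖fourier n z‖ = 1 := by
  rw [fourier_apply]
  exact Circle.norm_coe _

/-- Integration by parts over one period. -/
lemma integral_fourier_mul_deriv (n : ℤ) (v v' : ℝ → ℂ) (hv : ∀ y, HasDerivAt v (v' y) y)
    (hv' : Continuous v') (hper : v 1 = v 0) :
    ∫ y in (0 : ℝ)..1, fourier (-n) (y : UnitAddCircle) * v' y =
      (2 * Real.pi * Complex.I * n) *
        ∫ y in (0 : ℝ)..1, fourier (-n) (y : UnitAddCircle) * v y := by
  have hcont := continuous_fourier_real (-n)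
  rw [intervalIntegral.integral_mul_deriv_eq_deriv_mul
    (fun y _ => hasDerivAt_fourier_neg 1 n y) (fun y _ => hv y)
    (by apply Continuous.intervalIntegrable; fun_prop) (hv'.intervalIntegrable _ _),
    ← intervalIntegral.integral_const_mul]
  have h1 : ((1 : ℝ) : UnitAddCircle) = ((0 : ℝ) : UnitAddCircle) := by
    simp
  rw [h1, hper, sub_self, zero_sub, ← intervalIntegral.integral_neg]
  congr 1
  ext y
  simp
  ring

/-- Rapid decay of the partial Fourier coefficients in the second variable, uniformly in the
first: each differentiation in `y` gains a factor `n`. -/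
lemma exists_partial_decay (N : ℕ) : ∀ G : ℝ × ℝ → ℂ, ContDiff ℝ (⊤ : ℕ∞) G →
    (∀ x y, G (x, y + 1) = G (x, y)) →
    ∃ B : ℝ, ∀ n : ℤ, ∀ x ∈ Set.Icc (0 : ℝ) 1,
      |(n : ℝ)| ^ N *
        ‖∫ y in (0 : ℝ)..1, fourier (-n) (y : UnitAddCircle) * G (x, y)‖ ≤ B := by
  induction N with
  | zero =>
    intro G hG _
    obtain ⟨B, hB⟩ := ((isCompact_Icc (a := (0 : ℝ)) (b := 1)).prod
      (isCompact_Icc (a := (0 : ℝ)) (b := 1))).exists_bound_of_continuousOn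
        hG.continuous.continuousOn
    refine ⟨B, fun n x hx => ?_⟩
    rw [pow_zero, one_mul]
    have := intervalIntegral.norm_integral_le_of_norm_le_const (a := (0 : ℝ)) (b := 1) (C := B)
      (f := fun y => fourier (-n) (y : UnitAddCircle) * G (x, y)) (fun y hy => by
        rw [Set.uIoc_of_le zero_le_one] at hy
        rw [norm_mul, norm_fourier_apply, one_mul]
        exact hB _ ⟨hx, hy.1.le, hy.2⟩)
    simpa using this
  | succ N ih =>
    intro G hG hper
    have hfd : ContDiff ℝ (⊤ : ℕ∞) (fderiv ℝ G) := hG.fderiv_right (by norm_cast)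
    have hG' : ContDiff ℝ (⊤ : ℕ∞) fun z => fderiv ℝ G z (0, 1) := hfd.clm_apply contDiff_const
    have hdiff : Differentiable ℝ G := hG.differentiable (by simp)
    have hder : ∀ x y, HasDerivAt (fun y => G (x, y)) (fderiv ℝ G (x, y) (0, 1)) y :=
      fun x y => (hdiff (x, y)).hasFDerivAt.comp_hasDerivAt y
        ((hasDerivAt_const y x).prodMk (hasDerivAt_id y))
    have hper' : ∀ x y, fderiv ℝ G (x, y + 1) (0, 1) = fderiv ℝ G (x, y) (0, 1) := by
      intro x y
      have h1 : HasDerivAt (fun y => G (x, y + 1)) (fderiv ℝ G (x, y + 1) (0, 1)) y :=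
        (hder x (y + 1)).comp_add_const y 1
      simp only [hper] at h1
      exact h1.unique (hder x y)
    obtain ⟨B, hB⟩ := ih _ hG' hper'
    -- The factor `2π ≥ 1` gained together with `n` is discarded, so the bound for the derivative
    -- also serves for `G`.
    refine ⟨B, fun n x hx => ?_⟩
    have hparts := integral_fourier_mul_deriv n (fun y => G (x, y)) _ (hder x)
      (hG'.continuous.comp (by fun_prop : Continuous fun y : ℝ => (x, y)))
      (by simpa using hper x 0)
    have := hB n x hx
    rw [hparts] at this
    simp only [norm_mul, Complex.norm_real, Complex.norm_I, Complex.norm_intCast,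
      Complex.norm_ofNat, Real.norm_eq_abs, abs_of_pos Real.pi_pos] at this
    refine le_trans ?_ this
    rw [pow_succ, mul_assoc]
    gcongr
    have : 1 ≤ 2 * Real.pi := by linarith [Real.pi_gt_three]
    nlinarith [abs_nonneg (n : ℝ)]

lemma exists_squareCoeff_decay_right (N : ℕ) (G : ℝ × ℝ → ℂ) (hG : ContDiff ℝ (⊤ : ℕ∞) G)
    (hper : ∀ x y, G (x, y + 1) = G (x, y)) :
    ∃ B : ℝ, ∀ m n : ℤ, |(n : ℝ)| ^ N * ‖squareCoeff G m n‖ ≤ B := by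
  obtain ⟨B, hB⟩ := exists_partial_decay N G hG hper
  refine ⟨B, fun m n => ?_⟩
  have := intervalIntegral.norm_integral_le_of_norm_le_const (a := (0 : ℝ)) (b := 1) (C := B)
    (f := fun x => ((|(n : ℝ)| ^ N : ℝ) : ℂ) * ∫ y in (0 : ℝ)..1,
      fourier (-m) (x : UnitAddCircle) * (fourier (-n) (y : UnitAddCircle) * G (x, y)))
    (fun x hx => by
      rw [Set.uIoc_of_le zero_le_one] at hx
      rw [intervalIntegral.integral_const_mul, norm_mul, norm_mul, norm_fourier_apply, one_mul]
      simpa using hB n x ⟨hx.1.le, hx.2⟩)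
  rw [intervalIntegral.integral_const_mul, norm_mul] at this
  simpa [squareCoeff] using this

lemma squareCoeff_swap (G : ℝ × ℝ → ℂ) (hG : Continuous G) (m n : ℤ) :
    squareCoeff (fun z => G z.swap) n m = squareCoeff G m n := by
  have h1 := continuous_fourier_real (-m)
  have h2 := continuous_fourier_real (-n)
  unfold squareCoeff
  rw [intervalIntegral_intervalIntegral_swap]
  · simp only [Prod.swap_prod_mk, mul_left_comm]
  · refine IntegrableOn.mono_set (t := Set.uIcc 0 1 ×ˢ Set.uIcc 0 1) ?_
      (Set.prod_mono Set.uIoc_subset_uIcc Set.uIoc_subset_uIcc)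
    refine ContinuousOn.integrableOn_compact (isCompact_uIcc.prod isCompact_uIcc) ?_
    refine Continuous.continuousOn ?_
    unfold Function.uncurry
    fun_prop

/-- Rapid decay of the Fourier coefficients, in terms of the sup norm of the frequency. -/
lemma exists_squareCoeff_decay (N : ℕ) (G : ℝ × ℝ → ℂ) (hG : ContDiff ℝ (⊤ : ℕ∞) G)
    (hper₁ : ∀ x y, G (x + 1, y) = G (x, y)) (hper₂ : ∀ x y, G (x, y + 1) = G (x, y)) :
    ∃ B : ℝ, 0 ≤ B ∧ ∀ k : Fin 2 → ℤ, ‖k‖ ^ N * ‖squareCoeff G (k 0) (k 1)‖ ≤ B := by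
  obtain ⟨B₂, hB₂⟩ := exists_squareCoeff_decay_right N G hG hper₂
  obtain ⟨B₁, hB₁⟩ := exists_squareCoeff_decay_right N (fun z => G z.swap)
    (hG.comp (contDiff_snd.prodMk contDiff_fst))
    (fun x y => hper₁ y x)
  have key : ∀ k : Fin 2 → ℤ, ‖k‖ ^ N * ‖squareCoeff G (k 0) (k 1)‖ ≤ max B₁ B₂ := by
    intro k
    have hk : ‖k‖ = max |(k 0 : ℝ)| |(k 1 : ℝ)| := by
      simp [Pi.norm_def, Fin.univ_succ, Int.norm_eq_abs]
    rcases le_total |(k 0 : ℝ)| |(k 1 : ℝ)| with h | h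
    · rw [hk, max_eq_right h]
      exact (hB₂ _ _).trans (le_max_right _ _)
    · rw [hk, max_eq_left h, ← squareCoeff_swap G hG.continuous]
      exact (hB₁ _ _).trans (le_max_left _ _)
  exact ⟨max B₁ B₂, le_trans (by positivity) (key 0), key⟩

/-! ### Fourier expansion -/

/-- The function on the torus induced by a `ℤ²`-periodic function. -/
lemma exists_torus_lift (G : ℝ × ℝ → ℂ) (hG : Continuous G)
    (hper : ∀ x y : ℝ, ∀ m n : ℤ, G (x + m, y + n) = G (x, y)) :
    ∃ F : C(UnitAddTorus (Fin 2), ℂ), ∀ w : Fin 2 → ℝ, F (fun i => (w i : UnitAddCircle)) =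
      G (w 0, w 1) := by
  let F : UnitAddTorus (Fin 2) → ℂ := fun z =>
    G ((AddCircle.equivIco 1 0 (z 0) : ℝ), (AddCircle.equivIco 1 0 (z 1) : ℝ))
  have hF : ∀ w : Fin 2 → ℝ, F (fun i => (w i : UnitAddCircle)) = G (w 0, w 1) := by
    intro w
    have h : ∀ x : ℝ, ((AddCircle.equivIco 1 0 (x : UnitAddCircle) : ℝ)) = x + (-⌊x⌋ : ℤ) := by
      intro x
      rw [AddCircle.coe_equivIco_mk_apply, div_one, mul_one, Int.fract]
      push_cast; ring
    simp only [F, h, hper]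
  refine ⟨⟨F, ?_⟩, hF⟩
  have hquot : IsOpenQuotientMap (Pi.map fun _ : Fin 2 => ((↑) : ℝ → UnitAddCircle)) :=
    IsOpenQuotientMap.piMap fun _ => QuotientAddGroup.isOpenQuotientMap_mk
  rw [← hquot.continuous_comp_iff]
  have : F ∘ (Pi.map fun _ : Fin 2 => ((↑) : ℝ → UnitAddCircle)) = fun w => G (w 0, w 1) :=
    funext hF
  rw [this]
  fun_prop

/-- Mathlib's coefficients of the induced function are the iterated integrals of `G`. -/
lemma mFourierCoeff_eq_squareCoeff (G : ℝ × ℝ → ℂ) (F : C(UnitAddTorus (Fin 2), ℂ))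
    (hF : ∀ w : Fin 2 → ℝ, F (fun i => (w i : UnitAddCircle)) = G (w 0, w 1))
    (k : Fin 2 → ℤ) :
    UnitAddTorus.mFourierCoeff F k = squareCoeff G (k 0) (k 1) := by
  have hcont : Continuous fun p : ℝ × ℝ => fourier (-k 0) (p.1 : UnitAddCircle) *
      (fourier (-k 1) (p.2 : UnitAddCircle) * F (fun i => (![p.1, p.2] i : UnitAddCircle))) := by
    have h0 := continuous_fourier_real (-k 0)
    have h1 := continuous_fourier_real (-k 1)
    have h2 : Continuous fun p : ℝ × ℝ =>
        (fun i => (![p.1, p.2] i : UnitAddCircle) : UnitAddTorus (Fin 2)) :=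
      continuous_pi fun i => (AddCircle.continuous_mk' 1).comp (by fin_cases i <;> simp <;> fun_prop)
    exact (h0.comp continuous_fst).mul
      ((h1.comp continuous_snd).mul (F.continuous.comp h2))
  have hFG : ∀ p : ℝ × ℝ, F (fun i => (![p.1, p.2] i : UnitAddCircle)) = G p :=
    fun p => hF ![p.1, p.2]
  simp only [hFG] at hcont
  have hset : {x : Fin 2 → ℝ | ∀ i, x i ∈ Set.Ioc ((0 : Fin 2 → ℝ) i) ((0 : Fin 2 → ℝ) i + 1)} =
      MeasurableEquiv.finTwoArrow ⁻¹' (Set.Ioc (0 : ℝ) 1 ×ˢ Set.Ioc (0 : ℝ) 1) := by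
    ext x
    simp [MeasurableEquiv.finTwoArrow, Fin.forall_fin_two]
  have hintegral : UnitAddTorus.mFourierCoeff F k =
      ∫ p in Set.Ioc (0 : ℝ) 1 ×ˢ Set.Ioc (0 : ℝ) 1, fourier (-k 0) (p.1 : UnitAddCircle) *
        (fourier (-k 1) (p.2 : UnitAddCircle) * G p) := by
    rw [UnitAddTorus.mFourierCoeff_eq_integral F k 0, hset,
      ← (volume_preserving_finTwoArrow ℝ).setIntegral_preimage_emb
        (MeasurableEquiv.measurableEmbedding _)]
    simp [UnitAddTorus.mFourier, MeasurableEquiv.finTwoArrow, hF, mul_assoc]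
  rw [hintegral, Measure.volume_eq_prod, setIntegral_prod]
  · simp only [squareCoeff, intervalIntegral.integral_of_le zero_le_one]
  · exact (hcont.continuousOn.integrableOn_compact
      ((isCompact_Icc (a := (0 : ℝ)) (b := 1)).prod (isCompact_Icc (a := (0 : ℝ)) (b := 1)))).mono_set
        (Set.prod_mono Set.Ioc_subset_Icc_self Set.Ioc_subset_Icc_self)

/-- The zero coefficient of the rescaled function is the torus average of `q`. -/
lemma squareCoeff_zero_eq (q : ℝ × ℝ → ℂ) (hq : Continuous q) :
    squareCoeff (fun z => q (2 * Real.pi * z.1, 2 * Real.pi * z.2)) 0 0 = fourierCoeff2 q 0 := by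
  have hpi : (2 * Real.pi) ≠ 0 := by positivity
  have hle : (0 : ℝ) ≤ 2 * Real.pi := by positivity
  have hinner : ∀ x, ∫ y in (0 : ℝ)..1, q (2 * Real.pi * x, 2 * Real.pi * y) =
      (2 * Real.pi)⁻¹ • ∫ y in (0 : ℝ)..2 * Real.pi, q (2 * Real.pi * x, y) := fun x => by
    simpa using intervalIntegral.integral_comp_mul_left (a := 0) (b := 1)
      (fun y => q (2 * Real.pi * x, y)) hpi
  have houter := intervalIntegral.integral_comp_mul_left (a := 0) (b := 1)
    (fun x => ∫ y in (0 : ℝ)..2 * Real.pi, q (x, y)) hpi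
  have hbox : ∫ x in (Set.Icc (0 : ℝ) (2 * Real.pi)) ×ˢ (Set.Icc (0 : ℝ) (2 * Real.pi)), q x =
      ∫ x in (0 : ℝ)..2 * Real.pi, ∫ y in (0 : ℝ)..2 * Real.pi, q (x, y) := by
    rw [Measure.volume_eq_prod, setIntegral_prod]
    · simp only [intervalIntegral.integral_of_le hle, integral_Icc_eq_integral_Ioc]
    · exact hq.continuousOn.integrableOn_compact (isCompact_Icc.prod isCompact_Icc)
  unfold squareCoeff fourierCoeff2
  simp only [neg_zero, fourier_zero, one_mul, hinner, intervalIntegral.integral_smul, houter]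
  simp only [dotZR, Prod.fst_zero, Prod.snd_zero, Int.cast_zero, zero_mul, add_zero,
    Complex.ofReal_zero, mul_zero, Complex.exp_zero, mul_one, hbox, smul_smul]
  congr 1
  field_simp

/-- The Fourier expansion of a smooth `(2πℤ)²`-periodic function, with rapidly decaying
coefficients. -/
lemma exists_fourier_expansion (q : ℝ × ℝ → ℂ) (hq : ContDiff ℝ (⊤ : ℕ∞) q)
    (hper : Periodic2 q) (N : ℕ) :
    ∃ (c : (Fin 2 → ℤ) → ℂ) (B : ℝ), 0 ≤ B ∧ c 0 = fourierCoeff2 q 0 ∧ Summable c ∧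
      (∀ k, k ≠ 0 → ‖k‖ ^ N * ‖c k‖ ≤ B * ‖k‖ ^ (-3 : ℝ)) ∧
      ∀ x : ℝ × ℝ, HasSum
        (fun k => c k * Complex.exp (Complex.I * dotZR (k 0, k 1) x)) (q x) := by
  set G : ℝ × ℝ → ℂ := fun z => q (2 * Real.pi * z.1, 2 * Real.pi * z.2) with hGdef
  have hG : ContDiff ℝ (⊤ : ℕ∞) G := hq.comp (by fun_prop)
  have hGper : ∀ x y : ℝ, ∀ m n : ℤ, G (x + m, y + n) = G (x, y) := by
    intro x y m n
    simpa only [hGdef, mul_add] using hper (2 * Real.pi * x, 2 * Real.pi * y) (m, n)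
  obtain ⟨B, hB0, hB⟩ := exists_squareCoeff_decay (N + 3) G hG
    (fun x y => by simpa using hGper x y 1 0) (fun x y => by simpa using hGper x y 0 1)
  obtain ⟨F, hF⟩ := exists_torus_lift G hG.continuous hGper
  have hk1 : ∀ k : Fin 2 → ℤ, k ≠ 0 → 1 ≤ ‖k‖ := by
    intro k hk
    obtain ⟨i, hi⟩ := Function.ne_iff.mp hk
    refine le_trans ?_ (norm_le_pi_norm k i)
    rw [Int.norm_eq_abs]
    exact_mod_cast Int.one_le_abs hi
  have hdecay : ∀ k : Fin 2 → ℤ, k ≠ 0 →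
      ‖k‖ ^ N * ‖squareCoeff G (k 0) (k 1)‖ ≤ B * ‖k‖ ^ (-3 : ℝ) := by
    intro k hk
    have hpos : 0 < ‖k‖ := by linarith [hk1 k hk]
    rw [Real.rpow_neg hpos.le, ← div_eq_mul_inv, le_div_iff₀ (by positivity)]
    refine le_trans (le_of_eq ?_) (hB k)
    rw [show (3 : ℝ) = ((3 : ℕ) : ℝ) by norm_num, Real.rpow_natCast]
    ring
  have hsum3 : Summable fun k : Fin 2 → ℤ => B * ‖k‖ ^ (-3 : ℝ) :=
    (EisensteinSeries.summable_one_div_norm_rpow (k := 3) (by norm_num)).mul_left B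
  have hsum : Summable fun k : Fin 2 → ℤ => squareCoeff G (k 0) (k 1) := by
    refine hsum3.of_norm_bounded_eventually ?_
    filter_upwards [(Set.finite_singleton (0 : Fin 2 → ℤ)).compl_mem_cofinite] with k hk
    refine le_trans ?_ (hdecay k hk)
    exact le_mul_of_one_le_left (norm_nonneg _) (one_le_pow₀ (hk1 k hk))
  have hcoeff : UnitAddTorus.mFourierCoeff F = fun k => squareCoeff G (k 0) (k 1) :=
    funext (mFourierCoeff_eq_squareCoeff G F hF)
  refine ⟨fun k => squareCoeff G (k 0) (k 1), B, hB0, squareCoeff_zero_eq q hq.continuous, hsum,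
    hdecay, fun x => ?_⟩
  have hpi : (Real.pi : ℂ) ≠ 0 := by exact_mod_cast Real.pi_ne_zero
  have h := UnitAddTorus.hasSum_mFourier_series_apply_of_summable (f := F) (hcoeff ▸ hsum)
    (fun i => ((![x.1 / (2 * Real.pi), x.2 / (2 * Real.pi)] i : ℝ) : UnitAddCircle))
  rw [hF, hcoeff] at h
  convert h using 1
  · ext k
    simp only [UnitAddTorus.mFourier, ContinuousMap.coe_mk, Fin.prod_univ_two, fourier_coe_apply,
      ← Complex.exp_add, smul_eq_mul, dotZR, Matrix.cons_val_zero, Matrix.cons_val_one]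
    congr 2
    push_cast
    field_simp
  · simp only [hGdef, Matrix.cons_val_zero, Matrix.cons_val_one]
    congr 1
    ext <;> field_simp

/-! ### Integration along the orbit -/

/-- For an absolutely convergent exponential sum with `i₀` as its only zero-frequency mode, the
integral over `[0, T]` differs from that of the constant term by at most `∑ b i`, uniformly in `T`:
a mode of frequency `l i ≠ 0` integrates to at most `2 ‖c i‖ / |l i|`. -/
lemma norm_integral_sub_le {ι : Type*} [Countable ι] [DecidableEq ι] (c : ι → ℂ) (l b : ι → ℝ)
    (i₀ : ι) (f : ℝ → ℂ) (hc : Summable c) (hb : Summable b) (hl₀ : l i₀ = 0) (hb₀ : 0 ≤ b i₀)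
    (hl : ∀ i, i ≠ i₀ → l i ≠ 0) (hbound : ∀ i, i ≠ i₀ → 2 * ‖c i‖ / |l i| ≤ b i)
    (hf : ∀ t : ℝ, HasSum (fun i => c i * Complex.exp (Complex.I * l i * t)) (f t)) (T : ℝ) :
    ‖(∫ t in (0 : ℝ)..T, f t) - T * c i₀‖ ≤ ∑' i, b i := by
  have hnorm : ∀ (i : ι) (t : ℝ), ‖Complex.exp (Complex.I * l i * t)‖ = 1 := by
    intro i t
    rw [show Complex.I * l i * t = ((l i * t : ℝ) : ℂ) * Complex.I by push_cast; ring]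
    exact Complex.norm_exp_ofReal_mul_I _
  have hintegral : HasSum (fun i => ∫ t in (0 : ℝ)..T, c i * Complex.exp (Complex.I * l i * t))
      (∫ t in (0 : ℝ)..T, f t) := by
    refine intervalIntegral.hasSum_integral_of_dominated_convergence (fun i _ => ‖c i‖) ?_ ?_ ?_ ?_
      ?_
    · intro i
      exact Continuous.aestronglyMeasurable (by fun_prop)
    · intro i
      exact .of_forall fun t _ => by rw [norm_mul, hnorm, mul_one]
    · exact .of_forall fun t _ => hc.norm
    · exact intervalIntegrable_const
    · exact .of_forall fun t _ => hf t
  have hsub := hintegral.sub (hasSum_ite_eq i₀ ((T : ℂ) * c i₀))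
  refine hsub.norm_le_of_bounded hb.hasSum fun i => ?_
  by_cases hi : i = i₀
  · subst hi
    simpa [hl₀] using hb₀
  · have hne : Complex.I * (l i : ℂ) ≠ 0 := by simpa using hl i hi
    rw [if_neg hi, sub_zero, intervalIntegral.integral_const_mul, integral_exp_mul_complex hne,
      norm_mul, norm_div]
    refine le_trans ?_ (hbound i hi)
    have h2 : ‖Complex.exp (Complex.I * l i * T) - Complex.exp (Complex.I * l i * (0 : ℝ))‖ ≤ 2 := by
      refine (norm_sub_le _ _).trans ?_
      rw [hnorm, hnorm]
      norm_num
    rw [norm_mul, Complex.norm_I, one_mul, Complex.norm_real, Real.norm_eq_abs, ← mul_div_assoc,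
      mul_comm 2]
    gcongr


/-- Estimate (0.16.1) of the paper: along a Diophantine frequency `a`, the time average
`(1/T)∫₀^T q(x + t a) dt` equals the torus average `q̂(0)` up to `O(1/T)`, uniformly
in the base point `x`. -/
theorem statement9 (C₀ N₀ : ℝ) (hC₀ : 0 < C₀) (hN₀ : 0 < N₀) (a : ℝ × ℝ)
    (hdio : ∀ k : ℤ × ℤ, k ≠ 0 → 1 / (C₀ * zNorm k ^ N₀) ≤ |dotZR k a|)
    (q : ℝ × ℝ → ℂ) (hq : ContDiff ℝ (⊤ : ℕ∞) q) (hper : Periodic2 q) :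
    ∃ C > 0, ∀ T : ℝ, 1 ≤ T → ∀ x : ℝ × ℝ,
      ‖(1 / (T : ℂ)) * (∫ t in (0 : ℝ)..T, q (x + t • a)) - fourierCoeff2 q 0‖ ≤ C / T := by
  -- Decay of order `⌈N₀⌉ + 3`: `N₀` powers pay for the small divisors, and `‖k‖⁻³` is summable
  -- over `ℤ²`.
  obtain ⟨c, B, hB0, hc0, hc, hdecay, hexp⟩ := exists_fourier_expansion q hq hper ⌈N₀⌉₊
  have hk1 : ∀ k : Fin 2 → ℤ, k ≠ 0 → 1 ≤ zNorm (k 0, k 1) ∧ 1 ≤ ‖k‖ ∧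
      zNorm (k 0, k 1) ≤ 2 * ‖k‖ := by
    intro k hk
    obtain ⟨i, hi⟩ := Function.ne_iff.mp hk
    have h0 : |(k 0 : ℝ)| ≤ ‖k‖ := by simpa [Int.norm_eq_abs] using norm_le_pi_norm k 0
    have h1 : |(k 1 : ℝ)| ≤ ‖k‖ := by simpa [Int.norm_eq_abs] using norm_le_pi_norm k 1
    have hi1 : 1 ≤ |(k i : ℝ)| := by exact_mod_cast Int.one_le_abs hi
    have hi2 : 1 ≤ (k i : ℝ) ^ 2 := by rw [← sq_abs]; nlinarith
    refine ⟨?_, ?_, ?_⟩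
    · refine Real.one_le_sqrt.mpr ?_
      fin_cases i <;> simp only [Fin.zero_eta, Fin.mk_one] at hi2 <;>
        nlinarith [sq_nonneg (k 0 : ℝ), sq_nonneg (k 1 : ℝ)]
    · fin_cases i <;> simp only [Fin.zero_eta, Fin.mk_one] at hi1 <;> linarith
    · refine Real.sqrt_le_iff.mpr ⟨by positivity, ?_⟩
      nlinarith [sq_abs (k 0 : ℝ), sq_abs (k 1 : ℝ), abs_nonneg (k 0 : ℝ), abs_nonneg (k 1 : ℝ)]
  set b : (Fin 2 → ℤ) → ℝ := fun k => 2 * C₀ * 2 ^ N₀ * B * ‖k‖ ^ (-3 : ℝ) with hb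
  have hb_nonneg : ∀ k, 0 ≤ b k := fun k => by positivity
  have hb_sum : Summable b :=
    (EisensteinSeries.summable_one_div_norm_rpow (k := 3) (by norm_num)).mul_left _
  have hsmall : ∀ k : Fin 2 → ℤ, k ≠ 0 →
      dotZR (k 0, k 1) a ≠ 0 ∧ 2 * ‖c k‖ / |dotZR (k 0, k 1) a| ≤ b k := by
    intro k hk
    obtain ⟨hz, hn, hzn⟩ := hk1 k hk
    have hk' : (k 0, k 1) ≠ (0 : ℤ × ℤ) := fun h => hk <| by
      ext i
      fin_cases i
      · exact congrArg Prod.fst h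
      · exact congrArg Prod.snd h
    have hzpos : 0 < zNorm (k 0, k 1) ^ N₀ := Real.rpow_pos_of_pos (by linarith) _
    have hd := hdio _ hk'
    have hpos : 0 < 1 / (C₀ * zNorm (k 0, k 1) ^ N₀) := by positivity
    refine ⟨abs_pos.mp (hpos.trans_le hd), ?_⟩
    have hrpow : zNorm (k 0, k 1) ^ N₀ ≤ 2 ^ N₀ * ‖k‖ ^ ⌈N₀⌉₊ := by
      calc zNorm (k 0, k 1) ^ N₀ ≤ (2 * ‖k‖) ^ N₀ :=
            Real.rpow_le_rpow (by linarith) hzn hN₀.le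
        _ = 2 ^ N₀ * ‖k‖ ^ N₀ := Real.mul_rpow (by norm_num) (by linarith)
        _ ≤ 2 ^ N₀ * ‖k‖ ^ ⌈N₀⌉₊ := by
            rw [← Real.rpow_natCast ‖k‖]
            gcongr
            exact Nat.le_ceil N₀
    calc 2 * ‖c k‖ / |dotZR (k 0, k 1) a|
        ≤ 2 * ‖c k‖ / (1 / (C₀ * zNorm (k 0, k 1) ^ N₀)) := by gcongr
      _ = 2 * C₀ * (zNorm (k 0, k 1) ^ N₀ * ‖c k‖) := by field_simp
      _ ≤ 2 * C₀ * ((2 ^ N₀ * ‖k‖ ^ ⌈N₀⌉₊) * ‖c k‖) := by gcongr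
      _ = 2 * C₀ * 2 ^ N₀ * (‖k‖ ^ ⌈N₀⌉₊ * ‖c k‖) := by ring
      _ ≤ 2 * C₀ * 2 ^ N₀ * (B * ‖k‖ ^ (-3 : ℝ)) := 
          mul_le_mul_of_nonneg_left (hdecay k hk) (by positivity)
      _ = b k := by rw [hb]; ring
  have htsum : 0 ≤ ∑' k, b k := tsum_nonneg hb_nonneg
  refine ⟨(∑' k, b k) + 1, by linarith, fun T hT x => ?_⟩
  have hT0 : 0 < T := by linarith
  -- The base point only contributes the unimodular phases `exp (i k·x)`, so that the bound `b`
  -- does not depend on it.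
  have hphase : ∀ k : Fin 2 → ℤ, ‖Complex.exp (Complex.I * dotZR (k 0, k 1) x)‖ = 1 := fun k => by
    rw [mul_comm]
    exact Complex.norm_exp_ofReal_mul_I _
  have hnorm : ∀ k : Fin 2 → ℤ, ‖c k * Complex.exp (Complex.I * dotZR (k 0, k 1) x)‖ = ‖c k‖ :=
    fun k => by rw [norm_mul, hphase, mul_one]
  have key := norm_integral_sub_le
    (fun k => c k * Complex.exp (Complex.I * dotZR (k 0, k 1) x))
    (fun k => dotZR (k 0, k 1) a) b 0 (fun t => q (x + t • a))
    (.of_norm (by simpa only [hnorm] using hc.norm)) hb_sum (by simp [dotZR]) (hb_nonneg 0)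
    (fun k hk => (hsmall k hk).1) (fun k hk => by rw [hnorm]; exact (hsmall k hk).2)
    (fun t => by
      convert hexp (x + t • a) using 1
      ext k
      rw [mul_assoc, ← Complex.exp_add]
      congr 2
      simp only [dotZR, Prod.fst_add, Prod.snd_add, Prod.smul_fst, Prod.smul_snd, smul_eq_mul]
      push_cast
      ring) T
  have hzero : c 0 * Complex.exp (Complex.I * dotZR ((0 : Fin 2 → ℤ) 0, (0 : Fin 2 → ℤ) 1) x) =
      fourierCoeff2 q 0 := by
    rw [hc0]
    simp [dotZR]
  rw [hzero] at key
  have hTC : (T : ℂ) ≠ 0 := by exact_mod_cast hT0.ne'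
  have hfactor : (1 / (T : ℂ)) * (∫ t in (0 : ℝ)..T, q (x + t • a)) - fourierCoeff2 q 0 =
      ((∫ t in (0 : ℝ)..T, q (x + t • a)) - T * fourierCoeff2 q 0) / T := by
    field_simp
  rw [hfactor, norm_div, Complex.norm_real, Real.norm_eq_abs, abs_of_pos hT0]
  gcongr
  linarith
end

section
/- Let n ≥ 1, N ≥ 1 be integers and C > 0. Suppose ξ : [0, T] → ℝⁿ is C¹ with ‖ξ'(t)‖ ≤ C‖ξ(t)‖^{N+1} for all t ∈ [0, T], let r = ‖ξ(0)‖ > 0, and assume T ≤ r^{−N}/(C·2^{N+2}). Then for all t ∈ [0, T]: ‖ξ(t)‖ ≤ 2r and ‖ξ(t) − ξ(0)‖ ≤ C·2^{N+1}·t·r^{N+1}. -/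
/-!
The estimate is a single application of the fencing theorem
`image_norm_le_of_norm_deriv_right_lt_deriv_boundary` to the displacement `ξ t - ξ 0` with the
linear barrier `K * t`, where `r = ‖ξ 0‖` and `K = C * (2 * r) ^ (N + 1)`. The bound on `T` says
exactly that the barrier never exceeds `r / 2`, so wherever the displacement touches it one has
`‖ξ t‖ ≤ 3 / 2 * r < 2 * r`, and the differential inequality gives `‖ξ' t‖ < K`: the displacement
cannot cross the barrier. Both conclusions follow.
-/


/-- The "continuous induction" estimate (1.8) of the paper: if `ξ : [0, T] → ℝⁿ` is C¹
with `‖ξ'(t)‖ ≤ C ‖ξ(t)‖^{N+1}`, `r = ‖ξ(0)‖ > 0`, and `T ≤ r^{−N}/(C·2^{N+2})`,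
then `‖ξ(t)‖ ≤ 2r` and `‖ξ(t) − ξ(0)‖ ≤ C·2^{N+1}·t·r^{N+1}` on `[0, T]`. -/
theorem statement12 (n N : ℕ) (hn : 1 ≤ n) (hN : 1 ≤ N) (C : ℝ) (hC : 0 < C)
    (T : ℝ) (hT0 : 0 ≤ T) (ξ ξ' : ℝ → EuclideanSpace ℝ (Fin n))
    (hderiv : ∀ t ∈ Set.Icc (0 : ℝ) T, HasDerivWithinAt ξ (ξ' t) (Set.Icc (0 : ℝ) T) t)
    (hcont : ContinuousOn ξ' (Set.Icc (0 : ℝ) T))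
    (hbound : ∀ t ∈ Set.Icc (0 : ℝ) T, ‖ξ' t‖ ≤ C * ‖ξ t‖ ^ (N + 1))
    (hr : 0 < ‖ξ 0‖)
    (hT : T ≤ (‖ξ 0‖ ^ N)⁻¹ / (C * 2 ^ (N + 2))) :
    ∀ t ∈ Set.Icc (0 : ℝ) T,
      ‖ξ t‖ ≤ 2 * ‖ξ 0‖ ∧ ‖ξ t - ξ 0‖ ≤ C * 2 ^ (N + 1) * t * ‖ξ 0‖ ^ (N + 1) := by
  set r := ‖ξ 0‖ with hrdef
  set K : ℝ := C * 2 ^ (N + 1) * r ^ (N + 1) with hK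
  have hK0 : 0 < K := by positivity
  have hKT : K * T ≤ r / 2 := by
    calc K * T ≤ K * ((r ^ N)⁻¹ / (C * 2 ^ (N + 2))) := by gcongr
      _ = r / 2 := by
        rw [hK]
        field_simp
        ring
  -- As long as the displacement is at most `K * t`, the norm is at most `3 / 2 * r`.
  have hnorm : ∀ t ∈ Set.Icc (0 : ℝ) T, ‖ξ t - ξ 0‖ ≤ K * t → ‖ξ t‖ ≤ 3 / 2 * r := by
    intro t ht h
    have h1 : ‖ξ t‖ ≤ ‖ξ t - ξ 0‖ + r := norm_le_norm_sub_add _ _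
    have h2 : K * t ≤ K * T := by gcongr; exact ht.2
    linarith
  have hfence : ∀ ⦃t⦄, t ∈ Set.Icc (0 : ℝ) T → ‖ξ t - ξ 0‖ ≤ K * t := by
    refine image_norm_le_of_norm_deriv_right_lt_deriv_boundary
      (f := fun t => ξ t - ξ 0) (f' := ξ') (B := fun t => K * t) (B' := fun _ => K)
      ?_ ?_ (by simp) ?_ ?_
    · exact fun t ht => ((hderiv t ht).sub_const _).continuousWithinAt
    · intro t ht
      exact ((hderiv t (Set.Ico_subset_Icc_self ht)).sub_const _).mono_of_mem_nhdsWithin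
        (Icc_mem_nhdsGE_of_mem ht)
    · intro t
      simpa using (hasDerivAt_id t).const_mul K
    · intro t ht h
      have ht' := Set.Ico_subset_Icc_self ht
      have hle := hnorm t ht' h.le
      calc ‖ξ' t‖ ≤ C * ‖ξ t‖ ^ (N + 1) := hbound t ht'
        _ < C * (2 * r) ^ (N + 1) := by
          gcongr
          linarith
        _ = K := by rw [hK, mul_pow]; ring
  intro t ht
  refine ⟨by linarith [hnorm t ht (hfence ht)], (hfence ht).trans_eq ?_⟩
  rw [hK]
  ring
end

section
/- Let h : [−1, 1] → ℝ be C⁴. Then there exists C > 0 such that for all r ∈ (0, 1]: | ∫_{−r}^{r} h(x)·(r² − x²)^{−1/2} dx − π·h(0) − (π/4)·h''(0)·r² | ≤ C·r⁴. -/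
/-!
The substitution `x = r sin t` turns the singular integral into `∫ h (r sin t) dt` over
`[-π/2, π/2]` (`integral_div_sqrt_eq`). The third order Taylor expansion of `h` at `0`, with
remainder at most `K |x| ^ 4` on `[-1, 1]` (`exists_taylor_bound`), is then integrated term by
term: the odd powers of `sin` integrate to zero, `∫ 1 = π` and `∫ sin² = π / 2`, while the
remainder contributes at most `π K r ^ 4`.
-/

open MeasureTheory

open Set in
/-- One step of Taylor's estimate: integrating a bound `K |x| ^ n` on the derivative of a function
vanishing at `0` gives the bound `K |x| ^ (n + 1)` on the function, by the mean value inequality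
on `[-|x|, |x|]`. -/
lemma abs_le_of_abs_deriv_le {f f' : ℝ → ℝ} {K : ℝ} (hK : 0 ≤ K) (n : ℕ)
    (hf : ∀ x ∈ Icc (-1 : ℝ) 1, HasDerivWithinAt f (f' x) (Icc (-1 : ℝ) 1) x)
    (h0 : f 0 = 0) (hb : ∀ x ∈ Icc (-1 : ℝ) 1, |f' x| ≤ K * |x| ^ n) :
    ∀ x ∈ Icc (-1 : ℝ) 1, |f x| ≤ K * |x| ^ (n + 1) := by
  intro x hx
  have hx1 : |x| ≤ 1 := abs_le.2 hx
  have hsub : Icc (-|x|) |x| ⊆ Icc (-1 : ℝ) 1 := Icc_subset_Icc (by linarith) hx1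
  have := (convex_Icc (-|x|) |x|).norm_image_sub_le_of_norm_hasDerivWithin_le
    (f := f) (f' := f') (C := K * |x| ^ n) (x := 0) (y := x)
    (fun y hy => (hf y (hsub hy)).mono hsub)
    (fun y hy => (hb y (hsub hy)).trans (by
      have : |y| ≤ |x| := abs_le.2 hy
      gcongr))
    ⟨by simp, by simp⟩ ⟨neg_abs_le x, le_abs_self x⟩
  simpa [h0, pow_succ, mul_assoc] using this

open Set in
/-- Taylor's estimate of order three at the interior point `0`, uniform on `[-1, 1]`. -/
lemma exists_taylor_bound {h : ℝ → ℝ} (hh : ContDiffOn ℝ 4 h (Icc (-1 : ℝ) 1)) :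
    ∃ K > 0, ∃ a b : ℝ, ∀ x ∈ Icc (-1 : ℝ) 1,
      |h x - h 0 - a * x - iteratedDerivWithin 2 h (Icc (-1 : ℝ) 1) 0 / 2 * x ^ 2 - b * x ^ 3| ≤
        K * |x| ^ 4 := by
  have hu : UniqueDiffOn ℝ (Icc (-1 : ℝ) 1) := uniqueDiffOn_Icc (by norm_num)
  have hc : ContinuousOn (iteratedDerivWithin 4 h (Icc (-1 : ℝ) 1)) (Icc (-1 : ℝ) 1) :=
    hh.continuousOn_iteratedDerivWithin (m := 4) (by norm_num) hu
  have hd : ∀ k : ℕ, k < 4 → ∀ x ∈ Icc (-1 : ℝ) 1,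
      HasDerivWithinAt (iteratedDerivWithin k h (Icc (-1 : ℝ) 1))
        (iteratedDerivWithin (k + 1) h (Icc (-1 : ℝ) 1) x) (Icc (-1 : ℝ) 1) x := by
    intro k hk x hx
    rw [iteratedDerivWithin_succ]
    exact (hh.differentiableOn_iteratedDerivWithin (by exact_mod_cast hk) hu x hx).hasDerivWithinAt
  obtain ⟨K, hK⟩ := isCompact_Icc.exists_bound_of_continuousOn hc
  set d := fun k => iteratedDerivWithin k h (Icc (-1 : ℝ) 1) with hdd
  have hd0 : d 0 = h := by simp [hdd]
  have hK0 : 0 < |K| + 1 := by positivity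
  refine ⟨|K| + 1, hK0, d 1 0, d 3 0 / 6, ?_⟩
  have e3 := abs_le_of_abs_deriv_le (f := fun x => d 3 x - d 3 0) (f' := d 4) hK0.le 0
    (fun x hx => (hd 3 (by norm_num) x hx).sub_const _) (by simp)
    (fun x hx => by
      have := hK x hx
      rw [Real.norm_eq_abs] at this
      have := le_abs_self K
      simp only [pow_zero, mul_one]
      linarith)
  have e2 := abs_le_of_abs_deriv_le (f := fun x => d 2 x - d 2 0 - d 3 0 * x) hK0.le 1
    (fun x hx => (((hd 2 (by norm_num) x hx).sub_const _).sub
      ((hasDerivWithinAt_id x _).const_mul (d 3 0))).congr_deriv (by simp [hdd])) (by simp) e3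
  have e1 := abs_le_of_abs_deriv_le
    (f := fun x => d 1 x - d 1 0 - d 2 0 * x - d 3 0 / 2 * x ^ 2) hK0.le 2
    (fun x hx => ((((hd 1 (by norm_num) x hx).sub_const _).sub
      ((hasDerivWithinAt_id x _).const_mul (d 2 0))).sub
      (((hasDerivWithinAt_id x _).pow 2).const_mul (d 3 0 / 2))).congr_deriv
        (by simp [hdd]; ring)) (by simp) e2
  have e0 := abs_le_of_abs_deriv_le
    (f := fun x => d 0 x - d 0 0 - d 1 0 * x - d 2 0 / 2 * x ^ 2 - d 3 0 / 6 * x ^ 3) hK0.le 3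
    (fun x hx => (((((hd 0 (by norm_num) x hx).sub_const _).sub
      ((hasDerivWithinAt_id x _).const_mul (d 1 0))).sub
      (((hasDerivWithinAt_id x _).pow 2).const_mul (d 2 0 / 2))).sub
      (((hasDerivWithinAt_id x _).pow 3).const_mul (d 3 0 / 6))).congr_deriv
        (by simp [hdd]; ring)) (by simp) e1
  simpa only [hd0] using e0

open Set in
/-- The substitution `x = r sin t`. No integrability is needed, since the change of variables
formula holds for arbitrary integrands. -/
lemma integral_div_sqrt_eq (h : ℝ → ℝ) {r : ℝ} (hr : 0 < r) :
    ∫ x in Ioo (-r) r, h x / Real.sqrt (r ^ 2 - x ^ 2) =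
      ∫ t in (-(Real.pi / 2))..(Real.pi / 2), h (r * Real.sin t) := by
  have himg : (fun t => r * Real.sin t) '' Ioo (-(Real.pi / 2)) (Real.pi / 2) = Ioo (-r) r := by
    ext x
    constructor
    · rintro ⟨t, ht, rfl⟩
      have hc := Real.cos_pos_of_mem_Ioo ht
      have h1 := Real.sin_sq_add_cos_sq t
      have h2 : |Real.sin t| < 1 := by
        rw [← sq_lt_one_iff_abs_lt_one]
        nlinarith
      have h3 := abs_lt.1 h2
      constructor <;> simp only <;> nlinarith
    · rintro ⟨h1, h2⟩
      have h1' : -1 < x / r := by rw [lt_div_iff₀ hr]; linarith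
      have h2' : x / r < 1 := by rw [div_lt_iff₀ hr]; linarith
      refine ⟨Real.arcsin (x / r), ⟨Real.neg_pi_div_two_lt_arcsin.2 h1',
        Real.arcsin_lt_pi_div_two.2 h2'⟩, ?_⟩
      simp only [Real.sin_arcsin h1'.le h2'.le]
      field_simp
  have hinj : InjOn (fun t => r * Real.sin t) (Ioo (-(Real.pi / 2)) (Real.pi / 2)) :=
    fun a ha b hb hab => Real.injOn_sin (Ioo_subset_Icc_self ha) (Ioo_subset_Icc_self hb)
      (mul_left_cancel₀ hr.ne' hab)
  rw [← himg, integral_image_eq_integral_abs_deriv_smul measurableSet_Ioo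
    (fun t _ => ((Real.hasDerivAt_sin t).const_mul r).hasDerivWithinAt) hinj,
    intervalIntegral.integral_of_le (by linarith [Real.pi_pos]), integral_Ioc_eq_integral_Ioo]
  refine setIntegral_congr_fun measurableSet_Ioo fun t ht => ?_
  have hc : 0 < r * Real.cos t := mul_pos hr (Real.cos_pos_of_mem_Ioo ht)
  have hs : r ^ 2 - (r * Real.sin t) ^ 2 = (r * Real.cos t) ^ 2 := by
    linear_combination (-r ^ 2) * Real.sin_sq_add_cos_sq t
  simp only [smul_eq_mul]
  rw [hs, Real.sqrt_sq hc.le, abs_of_pos hc, mul_div_cancel₀ _ hc.ne']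

/-- The asymptotic expansion of the Example of subsection 7.2 of the paper: for a C⁴
function `h` on `[−1, 1]`,
`∫_{−r}^{r} h(x)(r² − x²)^{−1/2} dx = π h(0) + (π/4) h''(0) r² + O(r⁴)` as `r → 0`. -/
theorem statement13 (h : ℝ → ℝ) (hh : ContDiffOn ℝ 4 h (Set.Icc (-1 : ℝ) 1)) :
    ∃ C > 0, ∀ r : ℝ, 0 < r → r ≤ 1 →
      |(∫ x in Set.Ioo (-r) r, h x / Real.sqrt (r ^ 2 - x ^ 2)) - Real.pi * h 0 -
          (Real.pi / 4) * iteratedDerivWithin 2 h (Set.Icc (-1 : ℝ) 1) 0 * r ^ 2| ≤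
        C * r ^ 4 := by
  obtain ⟨K, hK, a, b, hT⟩ := exists_taylor_bound hh
  set c := iteratedDerivWithin 2 h (Set.Icc (-1 : ℝ) 1) 0
  refine ⟨K * Real.pi, by positivity, fun r hr hr1 => ?_⟩
  rw [integral_div_sqrt_eq h hr]
  have habs : ∀ t, |r * Real.sin t| ≤ r := fun t => by
    rw [abs_mul, abs_of_pos hr]
    exact mul_le_of_le_one_right hr.le (Real.abs_sin_le_one t)
  have hmem : ∀ t, r * Real.sin t ∈ Set.Icc (-1 : ℝ) 1 :=
    fun t => abs_le.1 ((habs t).trans hr1)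
  have hcont : Continuous fun t => h (r * Real.sin t) :=
    hh.continuousOn.comp_continuous (by fun_prop) hmem
  have hbound := intervalIntegral.norm_integral_le_of_norm_le_const
    (a := -(Real.pi / 2)) (b := Real.pi / 2) (C := K * r ^ 4)
    (f := fun t => h (r * Real.sin t) - h 0 - a * r * Real.sin t - c / 2 * r ^ 2 * Real.sin t ^ 2 -
      b * r ^ 3 * Real.sin t ^ 3) (fun t _ => by
        have h1 := hT _ (hmem t)
        have h2 : |r * Real.sin t| ^ 4 ≤ r ^ 4 := by
          gcongr
          exact habs t
        rw [Real.norm_eq_abs]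
        calc _ = _ := by congr 1; ring
          _ ≤ _ := h1
          _ ≤ _ := by gcongr)
  have hint : ∫ t in (-(Real.pi / 2))..(Real.pi / 2), (h (r * Real.sin t) - h 0 -
      a * r * Real.sin t - c / 2 * r ^ 2 * Real.sin t ^ 2 - b * r ^ 3 * Real.sin t ^ 3) =
      (∫ t in (-(Real.pi / 2))..(Real.pi / 2), h (r * Real.sin t)) - Real.pi * h 0 -
        (Real.pi / 4) * c * r ^ 2 := by
    rw [intervalIntegral.integral_sub, intervalIntegral.integral_sub,
      intervalIntegral.integral_sub, intervalIntegral.integral_sub,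
      intervalIntegral.integral_const_mul, intervalIntegral.integral_const_mul,
      intervalIntegral.integral_const_mul, intervalIntegral.integral_const, integral_sin,
      integral_sin_sq, integral_sin_pow_three]
    · simp
      ring
    all_goals refine Continuous.intervalIntegrable ?_ _ _
    all_goals repeat' apply Continuous.sub
    all_goals first | exact hcont | fun_prop
  rw [hint, Real.norm_eq_abs] at hbound
  refine hbound.trans_eq ?_
  rw [sub_neg_eq_add, add_halves, abs_of_pos Real.pi_pos]
  ring
end
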